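/- For every n ≥ 0, the following identity of polynomials in q₊,q₋ holds: Σ_{π ∈ P₂^{sym}(2n)} q₋^{c₋(π)} q₊^{l_c(π)} = Σ_{π ∈ P₂(2n)} (1+q₋)^{c(π)} (2q₊)^{n−c(π)}, where P₂(2n) is the set of pair partitions (perfect matchings) of {1,…,2n} and, for π ∈ P₂(2n), c(π) is the number of cycles (connected components) of the union of π with the unique noncrossing pair partition π̂ of {1,…,2n} having the same set of left legs as π, viewed as a 2-regular multigraph on {1,…,2n}. -/

import Mathlib

noncomputable section

namespace TypeB

/-! ### Symmetric pair partitions of [±2n] and their cycles -/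

/-- Negation of a set of integers. -/
def negSet (B : Set ℤ) : Set ℤ := (fun x : ℤ => -x) '' B

/-- The set [±m] = {−m,…,−1,1,…,m} ⊆ ℤ. -/
def pmSet (m : ℕ) : Set ℤ := {i | i ≠ 0 ∧ |i| ≤ (m : ℤ)}

/-- π is a set partition of S. -/
def IsPartitionOn (S : Set ℤ) (π : Set (Set ℤ)) : Prop :=
  (∀ B ∈ π, B ⊆ S ∧ B.Nonempty) ∧ (∀ x ∈ S, ∃! B, B ∈ π ∧ x ∈ B)

def IsPairB (B : Set ℤ) : Prop := ∃ a b : ℤ, a ≠ b ∧ B = {a, b}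

def IsSingleB (B : Set ℤ) : Prop := ∃ a : ℤ, B = {a}

/-- P₂^{sym}(2n): partitions of [±2n] into pairs, invariant under negation, with no
pair equal to its own negation. -/
def P2sym (n : ℕ) (π : Set (Set ℤ)) : Prop :=
  IsPartitionOn (pmSet (2 * n)) π ∧ (∀ B ∈ π, IsPairB B) ∧
  (∀ B ∈ π, negSet B ∈ π) ∧ (∀ B ∈ π, negSet B ≠ B)

/-- Noncrossing partitions: no i < j < k < l with i,k in one block and j,l in another. -/
def NonCrossing (π : Set (Set ℤ)) : Prop :=
  ¬ ∃ (i j k l : ℤ) (B C : Set ℤ), B ∈ π ∧ C ∈ π ∧ B ≠ C ∧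
    i < j ∧ j < k ∧ k < l ∧ i ∈ B ∧ k ∈ B ∧ j ∈ C ∧ l ∈ C

/-- Right legs of positive pairs. -/
def posRightLegs (π : Set (Set ℤ)) : Set ℤ :=
  {b | ∃ a : ℤ, a < b ∧ ({a, b} : Set ℤ) ∈ π ∧ -a < b}

/-- Left legs of negative pairs. -/
def negLeftLegs (π : Set (Set ℤ)) : Set ℤ :=
  {a | ∃ b : ℤ, a < b ∧ ({a, b} : Set ℤ) ∈ π ∧ ¬(-a < b)}

/-- Pairs of ρ do not cover singletons of ρ. -/
def NoCoveredSingleton (ρ : Set (Set ℤ)) : Prop :=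
  ¬ ∃ a b c : ℤ, a < c ∧ c < b ∧ ({a, b} : Set ℤ) ∈ ρ ∧ ({c} : Set ℤ) ∈ ρ

/-- The defining properties of the noncrossing partition π̂ of [±m] associated with π:
a partition into pairs and singletons, noncrossing, symmetric, with every block inside
{1,…,m} or {−m,…,−1}, having the same right legs of positive pairs and the same left
legs of negative pairs as π, and whose pairs do not cover singletons. -/
def HatProps (m : ℕ) (π ρ : Set (Set ℤ)) : Prop :=
  IsPartitionOn (pmSet m) ρ ∧
  (∀ B ∈ ρ, IsPairB B ∨ IsSingleB B) ∧
  NonCrossing ρ ∧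
  (∀ B ∈ ρ, negSet B ∈ ρ) ∧
  (∀ B ∈ ρ, (∀ x ∈ B, 0 < x) ∨ (∀ x ∈ B, x < 0)) ∧
  posRightLegs ρ = posRightLegs π ∧
  negLeftLegs ρ = negLeftLegs π ∧
  NoCoveredSingleton ρ

open Classical in
/-- The partition π̂ associated with π (it exists and is unique). -/
def hatOf (m : ℕ) (π : Set (Set ℤ)) : Set (Set ℤ) :=
  if h : ∃ ρ, HatProps m π ρ then h.choose else ∅

/-- Two pairs A,B of π are connected when some block C of ρ = π̂ meets both. -/
def connStep (π ρ : Set (Set ℤ)) (A B : Set ℤ) : Prop :=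
  A ∈ π ∧ B ∈ π ∧ ∃ C ∈ ρ, (A ∩ C).Nonempty ∧ (B ∩ C).Nonempty

/-- The cycle (connected component) of pairs of π through A. -/
def compOf (π ρ : Set (Set ℤ)) (A : Set ℤ) : Set (Set ℤ) :=
  {B | Relation.ReflTransGen (connStep π ρ) A B}

/-- The set of all cycles (connected components of pairs). -/
def CompsOf (π ρ : Set (Set ℤ)) : Set (Set (Set ℤ)) :=
  {K | ∃ A ∈ π, K = compOf π ρ A}

/-- A component is negative when its support is invariant under negation. -/
def NegComp (K : Set (Set ℤ)) : Prop := negSet (⋃₀ K) = ⋃₀ K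

/-- c₋(π): the number of negative cycles of π ∈ P₂^{sym}(2n). -/
def cNeg (n : ℕ) (π : Set (Set ℤ)) : ℕ :=
  {K ∈ CompsOf π (hatOf (2 * n) π) | NegComp K}.ncard

/-- c(π): the number of cycles of π ∈ P₂^{sym}(2n); positive cycles come in mirror
pairs, each mirror pair counted once. -/
def cCount (n : ℕ) (π : Set (Set ℤ)) : ℕ :=
  cNeg n π + {K ∈ CompsOf π (hatOf (2 * n) π) | ¬NegComp K}.ncard / 2



/-- The set {1,…,m} ⊆ ℤ. -/
def posInterval (m : ℕ) : Set ℤ := {i | 1 ≤ i ∧ i ≤ (m : ℤ)}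

/-- P₂(m): pair partitions (perfect matchings) of {1,…,m}. -/
def P2on (m : ℕ) (π : Set (Set ℤ)) : Prop :=
  IsPartitionOn (posInterval m) π ∧ ∀ B ∈ π, IsPairB B

/-- The set of left legs of a partition into pairs. -/
def leftLegs (π : Set (Set ℤ)) : Set ℤ :=
  {a | ∃ b : ℤ, a < b ∧ ({a, b} : Set ℤ) ∈ π}

/-- The defining properties of the unique noncrossing pair partition π̂ of {1,…,m} with
the same set of left legs as π. -/
def Hat2Props (m : ℕ) (π ρ : Set (Set ℤ)) : Prop :=
  P2on m ρ ∧ NonCrossing ρ ∧ leftLegs ρ = leftLegs π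

open Classical in
/-- The noncrossing pair partition π̂ of {1,…,m} with the same left legs as π. -/
def hat2Of (m : ℕ) (π : Set (Set ℤ)) : Set (Set ℤ) :=
  if h : ∃ ρ, Hat2Props m π ρ then h.choose else ∅

/-- c(π) for π ∈ P₂(m): the number of cycles (connected components) of the union of π
with π̂, viewed as a 2-regular multigraph (components counted through the pairs of π). -/
def c2Count (m : ℕ) (π : Set (Set ℤ)) : ℕ :=
  (CompsOf π (hat2Of m π)).ncard

section aux
open Equiv.Perm

/-- twisted double cover of a permutation -/
def lp {X : Type} (p : Equiv.Perm X) (ε : X → ℤˣ) : Equiv.Perm (X × ℤˣ) where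
  toFun x := (p x.1, x.2 * ε x.1)
  invFun x := (p.symm x.1, x.2 * (ε (p.symm x.1))⁻¹)
  left_inv x := by simp [mul_assoc]
  right_inv x := by simp [mul_assoc]

lemma lp_pow {X : Type} (p : Equiv.Perm X) (ε : X → ℤˣ) (k : ℕ) (l : X) (s : ℤˣ) :
    (lp p ε ^ k) (l, s) = ((p ^ k) l, s * ∏ i ∈ Finset.range k, ε ((p ^ i) l)) := by
  induction k with
  | zero => simp
  | succ k ih =>
    rw [pow_succ', Equiv.Perm.mul_apply, ih, Finset.prod_range_succ, pow_succ' p,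
      Equiv.Perm.mul_apply]
    simp [lp, mul_assoc]

open Classical in
def sgn {X : Type} [Fintype X] (p : Equiv.Perm X) (ε : X → ℤˣ) (l : X) : ℤˣ :=
  ∏ x with SameCycle p l x, ε x

lemma sgn_eq_of_sameCycle {X : Type} [Fintype X] (p : Equiv.Perm X) (ε : X → ℤˣ) {l l' : X}
    (h : SameCycle p l l') : sgn p ε l = sgn p ε l' := by
  classical
  unfold sgn
  congr 1
  ext x
  simp only [Finset.mem_filter, Finset.mem_univ, true_and]
  exact ⟨fun h' => h.symm.trans h', fun h' => h.trans h'⟩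

lemma sgn_eq_prod_range {X : Type} [Fintype X] (p : Equiv.Perm X) (ε : X → ℤˣ) (l : X) :
    sgn p ε l = ∏ i ∈ Finset.range (Function.minimalPeriod p l), ε ((p ^ i) l) := by
  classical
  unfold sgn
  symm
  have hper : l ∈ Function.periodicPts p := by
    refine ⟨orderOf p, orderOf_pos p, ?_⟩
    rw [Function.IsPeriodicPt, Function.IsFixedPt, ← Equiv.Perm.coe_pow, pow_orderOf_eq_one]
    rfl
  refine Finset.prod_bij (fun i _ => (p ^ i) l) ?_ ?_ ?_ ?_
  · intro i _
    simp only [Finset.mem_filter, Finset.mem_univ, true_and]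
    exact ⟨i, by simp⟩
  · intro i hi j hj hij
    simp only [Equiv.Perm.coe_pow] at hij
    exact Function.iterate_injOn_Iio_minimalPeriod (by simpa using hi) (by simpa using hj) hij
  · intro x hx
    simp only [Finset.mem_filter, Finset.mem_univ, true_and] at hx
    obtain ⟨k, hk⟩ := hx.exists_nat_pow_eq
    refine ⟨k % Function.minimalPeriod p l, ?_, ?_⟩
    · simpa using Nat.mod_lt _ (Function.minimalPeriod_pos_of_mem_periodicPts hper)
    · rw [Equiv.Perm.coe_pow, Function.iterate_mod_minimalPeriod_eq, ← Equiv.Perm.coe_pow, hk]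
  · intros; rfl

lemma prod_range_mul_period {X : Type} [Fintype X] (p : Equiv.Perm X) (ε : X → ℤˣ) (l : X) (m : ℕ) :
    ∏ i ∈ Finset.range (Function.minimalPeriod p l * m), ε ((p ^ i) l) = sgn p ε l ^ m := by
  induction m with
  | zero => simp
  | succ m ih =>
    rw [Nat.mul_succ, Finset.prod_range_add, ih, pow_succ]
    congr 1
    rw [sgn_eq_prod_range]
    refine Finset.prod_congr rfl fun i _ => ?_
    congr 1
    rw [add_comm, pow_add, Equiv.Perm.mul_apply]
    congr 1
    rw [Equiv.Perm.coe_pow]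
    exact (Function.isPeriodicPt_minimalPeriod p l).mul_const m

lemma neg_iff {X : Type} [Fintype X] (p : Equiv.Perm X) (ε : X → ℤˣ) (l : X) (s : ℤˣ) :
    SameCycle (lp p ε) (l, s) (l, -s) ↔ sgn p ε l = -1 := by
  constructor
  · intro h
    obtain ⟨k, hk⟩ := h.exists_nat_pow_eq
    rw [lp_pow] at hk
    have h1 := congrArg Prod.fst hk
    have h2 := congrArg Prod.snd hk
    simp only at h1 h2
    have hd : Function.minimalPeriod p l ∣ k := by
      apply Function.IsPeriodicPt.minimalPeriod_dvd
      rw [Function.IsPeriodicPt, Function.IsFixedPt, ← Equiv.Perm.coe_pow, h1]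
    obtain ⟨m, rfl⟩ := hd
    rw [prod_range_mul_period] at h2
    rcases Int.units_eq_one_or (sgn p ε l) with h | h
    · rw [h] at h2
      rcases Int.units_eq_one_or s with h' | h' <;> rw [h'] at h2 <;> simp at h2
    · exact h
  · intro h
    refine ⟨(Function.minimalPeriod p l : ℤ), ?_⟩
    have := prod_range_mul_period p ε l 1
    rw [zpow_natCast, lp_pow]
    rw [mul_one] at this
    rw [this, h]
    ext
    · simp only
      rw [Equiv.Perm.coe_pow]
      exact Function.isPeriodicPt_minimalPeriod p l
    · simp

abbrev Orb {X : Type} (p : Equiv.Perm X) := Quotient (SameCycle.setoid p)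

instance {X : Type} [Finite X] (p : Equiv.Perm X) : Finite (Orb p) := Quotient.finite _
instance {X : Type} [Fintype X] (p : Equiv.Perm X) : Fintype (Orb p) := Fintype.ofFinite _

def sgnQ {X : Type} [Fintype X] (p : Equiv.Perm X) (ε : X → ℤˣ) : Orb p → ℤˣ :=
  Quotient.lift (sgn p ε) (fun _ _ h => sgn_eq_of_sameCycle p ε h)

lemma orb_eq {X : Type} {p : Equiv.Perm X} {x y : X} :
    ((Quotient.mk _ x : Orb p) = Quotient.mk _ y) ↔ SameCycle p x y := by
  rw [Quotient.eq]; rfl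

lemma card_orb_le {X : Type} [Fintype X] (p : Equiv.Perm X) :
    Fintype.card (Orb p) ≤ Fintype.card X :=
  Fintype.card_le_of_surjective _ (Quotient.mk_surjective)

open Classical in
lemma sum_sign {X : Type} [Fintype X] (p : Equiv.Perm X) (q : ℂ) :
    ∑ ε : X → ℤˣ, q ^ (Finset.univ.filter (fun K : Orb p => sgnQ p ε K = -1)).card
      = (1 + q) ^ (Fintype.card (Orb p)) * 2 ^ (Fintype.card X - Fintype.card (Orb p)) := by
  let isRep : X → Prop := fun x => (Quotient.mk (SameCycle.setoid p) x).out = x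
  let T : (X → ℤˣ) → (X → ℤˣ) := fun ε x => if isRep x then sgn p ε x else ε x
  have hrep : ∀ K : Orb p, isRep K.out := by
    intro K
    show (Quotient.mk (SameCycle.setoid p) K.out).out = K.out
    rw [Quotient.out_eq]
  have hT : Function.Injective T := by
    intro ε ε' h
    have hn : ∀ x, ¬ isRep x → ε x = ε' x := by
      intro x hx
      have := congrFun h x
      simpa [T, hx] using this
    funext x
    by_cases hx : isRep x
    · have := congrFun h x
      simp only [T, hx, if_true] at this
      unfold sgn at this
      have hm : x ∈ Finset.univ.filter (fun y => SameCycle p x y) := by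
        simp [SameCycle.refl]
      rw [← Finset.mul_prod_erase _ _ hm, ← Finset.mul_prod_erase _ _ hm] at this
      have h2 : ∏ y ∈ (Finset.univ.filter (fun y => SameCycle p x y)).erase x, ε y
          = ∏ y ∈ (Finset.univ.filter (fun y => SameCycle p x y)).erase x, ε' y := by
        refine Finset.prod_congr rfl fun y hy => hn y ?_
        simp only [Finset.mem_erase, Finset.mem_filter, Finset.mem_univ, true_and] at hy
        intro hy'
        apply hy.1
        have e : (Quotient.mk (SameCycle.setoid p) x) = Quotient.mk _ y := orb_eq.2 hy.2
        have hx' : (Quotient.mk (SameCycle.setoid p) x).out = x := hx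
        have hy'' : (Quotient.mk (SameCycle.setoid p) y).out = y := hy'
        rw [← hx', ← hy'', e]
      rw [h2] at this
      exact mul_right_cancel this
    · exact hn x hx
  have hTb : Function.Bijective T := (Finite.injective_iff_bijective).1 hT
  let w : X → ℤˣ → ℂ := fun x v => if isRep x ∧ v = -1 then q else 1
  have key : ∀ ε, q ^ (Finset.univ.filter (fun K : Orb p => sgnQ p ε K = -1)).card
      = ∏ x, w x (T ε x) := by
    intro ε
    rw [Finset.prod_ite, Finset.prod_const, Finset.prod_const_one, mul_one]
    congr 1
    refine Finset.card_bij (fun K _ => K.out) ?_ ?_ ?_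
    · intro K hK
      simp only [Finset.mem_filter, Finset.mem_univ, true_and] at hK ⊢
      refine ⟨hrep K, ?_⟩
      simp only [T, hrep K, if_true]
      rw [← hK]
      conv_rhs => rw [← Quotient.out_eq K]
      rfl
    · intro K _ K' _ h
      rw [← Quotient.out_eq K, ← Quotient.out_eq K', h]
    · intro x hx
      simp only [Finset.mem_filter, Finset.mem_univ, true_and] at hx
      refine ⟨Quotient.mk _ x, ?_, hx.1⟩
      simp only [Finset.mem_filter, Finset.mem_univ, true_and]
      have := hx.2
      simp only [T, hx.1, if_true] at this
      exact this
  rw [Finset.sum_congr rfl (fun ε _ => key ε)]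
  rw [Function.Bijective.sum_comp hTb (fun ε => ∏ x, w x (ε x))]
  have hps : ∑ ε : X → ℤˣ, ∏ x, w x (ε x) = ∏ x, ∑ v, w x v := by
    rw [Finset.prod_univ_sum, Fintype.piFinset_univ]
  rw [hps]
  have hs : ∀ x, ∑ v, w x v = if isRep x then 1 + q else 2 := by
    intro x
    have hu : (Finset.univ : Finset ℤˣ) = {1, -1} := by decide
    rw [hu, Finset.sum_pair (by decide)]
    by_cases hx : isRep x
    · have : (1 : ℤˣ) ≠ -1 := by decide
      simp [w, hx, this]
    · simp [w, hx]; norm_num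
  rw [Finset.prod_congr rfl (fun x _ => hs x), Finset.prod_ite, Finset.prod_const,
    Finset.prod_const]
  have hc : (Finset.univ.filter isRep).card = Fintype.card (Orb p) := by
    symm
    rw [← Finset.card_univ]
    refine Finset.card_bij (fun K _ => K.out) ?_ ?_ ?_
    · intro K _; simpa using hrep K
    · intro K _ K' _ h
      rw [← Quotient.out_eq K, ← Quotient.out_eq K', h]
    · intro x hx
      exact ⟨Quotient.mk _ x, Finset.mem_univ _, by simpa using hx⟩
  rw [hc, Finset.filter_not, Finset.card_sdiff_of_subset (Finset.filter_subset _ _), hc,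
    Finset.card_univ]

lemma lp_sameCycle_fst {X : Type} [Finite X] (p : Equiv.Perm X) (ε : X → ℤˣ) {x y : X × ℤˣ}
    (h : SameCycle (lp p ε) x y) : SameCycle p x.1 y.1 := by
  have := Fintype.ofFinite X
  obtain ⟨k, hk⟩ := h.exists_nat_pow_eq
  refine ⟨k, ?_⟩
  rw [← hk, zpow_natCast, lp_pow]

lemma lp_sameCycle_lift {X : Type} [Finite X] (p : Equiv.Perm X) (ε : X → ℤˣ) {x y : X}
    (h : SameCycle p x y) (s : ℤˣ) : ∃ t, SameCycle (lp p ε) (x, s) (y, t) := by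
  have := Fintype.ofFinite X
  obtain ⟨k, hk⟩ := h.exists_nat_pow_eq
  refine ⟨s * ∏ i ∈ Finset.range k, ε ((p ^ i) x), k, ?_⟩
  rw [zpow_natCast, lp_pow, hk]

/-- The projection of the orbits. -/
def orbProj {X : Type} [Finite X] (p : Equiv.Perm X) (ε : X → ℤˣ) : Orb (lp p ε) → Orb p :=
  Quotient.map Prod.fst (fun _ _ h => lp_sameCycle_fst p ε h)

open Classical in
lemma fiber_card {X : Type} [Fintype X] (p : Equiv.Perm X) (ε : X → ℤˣ) (K : Orb p) :
    (Finset.univ.filter (fun Q : Orb (lp p ε) => orbProj p ε Q = K)).card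
      = if sgnQ p ε K = -1 then 1 else 2 := by
  induction K using Quotient.inductionOn with
  | h l =>
  have hf : (Finset.univ.filter (fun Q : Orb (lp p ε) => orbProj p ε Q = Quotient.mk _ l))
      = {(Quotient.mk _ (l, 1) : Orb (lp p ε)), Quotient.mk _ (l, -1)} := by
    ext Q
    induction Q using Quotient.inductionOn with
    | h x =>
    obtain ⟨y, s⟩ := x
    simp only [Finset.mem_filter, Finset.mem_univ, true_and, Finset.mem_insert,
      Finset.mem_singleton]
    rw [orb_eq, orb_eq]
    have e : orbProj p ε (Quotient.mk _ (y, s)) = Quotient.mk _ y := rfl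
    rw [e, orb_eq]
    constructor
    · intro h
      obtain ⟨t, ht⟩ := lp_sameCycle_lift p ε h s
      rcases Int.units_eq_one_or t with rfl | rfl
      · exact Or.inl ht
      · exact Or.inr ht
    · rintro (h | h) <;> exact lp_sameCycle_fst p ε h
  rw [hf]
  have e : sgnQ p ε (Quotient.mk _ l) = sgn p ε l := rfl
  rw [e]
  split_ifs with h
  · rw [← neg_iff p ε l 1] at h
    rw [orb_eq.2 h]; simp
  · rw [← neg_iff p ε l 1] at h
    rw [Finset.card_pair]
    rw [Ne, orb_eq]; exact h

open Classical in
lemma card_neg_orb {X : Type} [Fintype X] (p : Equiv.Perm X) (ε : X → ℤˣ) :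
    {Q : Orb (lp p ε) | sgnQ p ε (orbProj p ε Q) = -1}.ncard
      = (Finset.univ.filter (fun K : Orb p => sgnQ p ε K = -1)).card := by
  rw [Set.ncard_eq_toFinset_card']
  rw [Finset.card_eq_sum_card_fiberwise (f := orbProj p ε)
    (t := Finset.univ.filter (fun K : Orb p => sgnQ p ε K = -1))]
  · rw [Finset.card_eq_sum_ones]
    refine Finset.sum_congr rfl fun K hK => ?_
    have h1 : sgnQ p ε K = -1 := by simpa using hK
    have := fiber_card p ε K
    rw [if_pos h1] at this
    rw [← this]
    congr 1
    ext Q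
    simp only [Finset.mem_filter, Set.mem_toFinset, Set.mem_ofPred_eq, Finset.mem_univ, true_and]
    constructor
    · exact fun h => h.2
    · rintro rfl; exact ⟨h1, rfl⟩
  · intro Q hQ
    simpa using hQ

open Classical in
lemma card_pos_orb {X : Type} [Fintype X] (p : Equiv.Perm X) (ε : X → ℤˣ) :
    {Q : Orb (lp p ε) | ¬ sgnQ p ε (orbProj p ε Q) = -1}.ncard
      = 2 * (Finset.univ.filter (fun K : Orb p => ¬ sgnQ p ε K = -1)).card := by
  rw [Set.ncard_eq_toFinset_card']
  rw [Finset.card_eq_sum_card_fiberwise (f := orbProj p ε)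
    (t := Finset.univ.filter (fun K : Orb p => ¬ sgnQ p ε K = -1))]
  · rw [Finset.card_eq_sum_ones, Finset.mul_sum]
    refine Finset.sum_congr rfl fun K hK => ?_
    have h1 : ¬ sgnQ p ε K = -1 := by simpa using hK
    have := fiber_card p ε K
    rw [if_neg h1] at this
    rw [mul_one, ← this]
    congr 1
    ext Q
    simp only [Finset.mem_filter, Set.mem_toFinset, Set.mem_ofPred_eq, Finset.mem_univ, true_and]
    constructor
    · exact fun h => h.2
    · rintro rfl; exact ⟨h1, rfl⟩
  · intro Q hQ
    simpa using hQ


/-- family of pairs -/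
def PP {X : Type} (u v : X → ℤ) : Set (Set ℤ) := Set.range (fun x => ({u x, v x} : Set ℤ))

lemma mem_PP {X : Type} {u v : X → ℤ} {B : Set ℤ} :
    B ∈ PP u v ↔ ∃ x, ({u x, v x} : Set ℤ) = B := Iff.rfl

lemma pair_inj {X : Type} {u v : X → ℤ} (hu : Function.Injective u)
    (huv : ∀ x y, u x ≠ v y) : Function.Injective (fun x => ({u x, v x} : Set ℤ)) := by
  intro x y h
  have : u x ∈ ({u y, v y} : Set ℤ) := by
    have h' : ({u x, v x} : Set ℤ) = {u y, v y} := h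
    rw [← h']; simp
  rcases this with h | h
  · exact hu h
  · exact absurd h (huv _ _)

lemma partition_PP {X : Type} {u v : X → ℤ} (hu : Function.Injective u)
    (hv : Function.Injective v) (huv : ∀ x y, u x ≠ v y) (S : Set ℤ)
    (hS : ∀ x, x ∈ S ↔ ∃ y, u y = x ∨ v y = x) :
    IsPartitionOn S (PP u v) ∧ ∀ B ∈ PP u v, IsPairB B := by
  refine ⟨⟨?_, ?_⟩, ?_⟩
  · rintro B ⟨x, rfl⟩
    refine ⟨?_, u x, by simp⟩
    rintro z (rfl | rfl)
    · exact (hS _).2 ⟨x, Or.inl rfl⟩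
    · exact (hS _).2 ⟨x, Or.inr rfl⟩
  · intro x hx
    obtain ⟨y, hy⟩ := (hS x).1 hx
    refine ⟨{u y, v y}, ⟨⟨y, rfl⟩, ?_⟩, ?_⟩
    · rcases hy with rfl | rfl <;> simp
    · rintro B ⟨⟨z, rfl⟩, hz⟩
      have : z = y := by
        rcases hy with rfl | rfl <;> rcases hz with h | h
        · exact (hu h).symm
        · exact absurd h (huv _ _)
        · exact absurd h.symm (huv _ _)
        · exact (hv h).symm
      rw [this]
  · rintro B ⟨x, rfl⟩
    exact ⟨u x, v x, huv _ _, rfl⟩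

lemma connStep_iff {X : Type} {u v : X → ℤ} (hu : Function.Injective u)
    (hv : Function.Injective v) (huv : ∀ x y, u x ≠ v y) (p : Equiv.Perm X) (x y : X) :
    connStep (PP u v) (PP v (fun z => u (p z))) {u x, v x} {u y, v y} ↔
      x = y ∨ y = p x ∨ x = p y := by
  have key : ∀ w z, (({u w, v w} : Set ℤ) ∩ {v z, u (p z)}).Nonempty ↔ w = z ∨ w = p z := by
    intro w z
    constructor
    · rintro ⟨t, (rfl | rfl), (h | h)⟩
      · exact absurd h (huv _ _)
      · exact Or.inr (hu h)
      · exact Or.inl (hv h)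
      · exact absurd h.symm (huv _ _)
    · rintro (rfl | rfl)
      · exact ⟨v w, by simp, by simp⟩
      · exact ⟨u (p z), by simp, by simp⟩
  constructor
  · rintro ⟨_, _, C, ⟨z, rfl⟩, h1, h2⟩
    rw [key] at h1 h2
    rcases h1 with rfl | rfl <;> rcases h2 with rfl | rfl <;> simp
  · rintro (rfl | rfl | rfl)
    · exact ⟨⟨x, rfl⟩, ⟨x, rfl⟩, _, ⟨x, rfl⟩, (key _ _).2 (by simp), (key _ _).2 (by simp)⟩
    · exact ⟨⟨x, rfl⟩, ⟨_, rfl⟩, _, ⟨x, rfl⟩, (key _ _).2 (by simp), (key _ _).2 (by simp)⟩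
    · exact ⟨⟨_, rfl⟩, ⟨y, rfl⟩, _, ⟨y, rfl⟩, (key _ _).2 (by simp), (key _ _).2 (by simp)⟩

/-- the component attached to an orbit -/
def compQ {X : Type} (u v : X → ℤ) (p : Equiv.Perm X) (Q : Orb p) : Set (Set ℤ) :=
  (fun x => ({u x, v x} : Set ℤ)) '' {y | (Quotient.mk _ y : Orb p) = Q}

lemma compOf_eq {X : Type} [Finite X] {u v : X → ℤ} (hu : Function.Injective u)
    (hv : Function.Injective v) (huv : ∀ x y, u x ≠ v y) (p : Equiv.Perm X) (x : X) :
    compOf (PP u v) (PP v (fun z => u (p z))) {u x, v x} = compQ u v p (Quotient.mk _ x) := by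
  have := Fintype.ofFinite X
  ext B
  constructor
  · intro h
    replace h : Relation.ReflTransGen (connStep (PP u v) (PP v (fun z => u (p z)))) {u x, v x} B := h
    induction h with
    | refl => exact ⟨x, rfl, rfl⟩
    | tail _ hs ih =>
      obtain ⟨y, hy, rfl⟩ := ih
      obtain ⟨z, rfl⟩ := hs.2.1
      refine ⟨z, ?_, rfl⟩
      have hy : (Quotient.mk _ y : Orb p) = Quotient.mk _ x := hy
      show (Quotient.mk _ z : Orb p) = Quotient.mk _ x
      rw [← hy, orb_eq]
      rcases (connStep_iff hu hv huv p _ _).1 hs with rfl | rfl | rfl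
      · exact SameCycle.refl _ _
      · exact SameCycle.symm ⟨1, by simp⟩
      · exact ⟨1, by simp⟩
  · rintro ⟨y, hy, rfl⟩
    replace hy : (Quotient.mk _ y : Orb p) = Quotient.mk _ x := hy
    obtain ⟨k, rfl⟩ := (orb_eq.1 hy).symm.exists_nat_pow_eq
    clear hy
    show Relation.ReflTransGen (connStep (PP u v) (PP v (fun z => u (p z)))) {u x, v x} _
    induction k with
    | zero => exact Relation.ReflTransGen.refl
    | succ k ih =>
      refine ih.tail ?_
      refine (connStep_iff hu hv huv p _ _).2 (Or.inr (Or.inl ?_))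
      rw [pow_succ', Equiv.Perm.mul_apply]

lemma CompsOf_eq {X : Type} [Finite X] {u v : X → ℤ} (hu : Function.Injective u)
    (hv : Function.Injective v) (huv : ∀ x y, u x ≠ v y) (p : Equiv.Perm X) :
    CompsOf (PP u v) (PP v (fun z => u (p z))) = Set.range (compQ u v p) := by
  ext K
  constructor
  · rintro ⟨A, ⟨x, rfl⟩, rfl⟩
    exact ⟨Quotient.mk _ x, (compOf_eq hu hv huv p x).symm⟩
  · rintro ⟨Q, rfl⟩
    induction Q using Quotient.inductionOn with
    | h x => exact ⟨_, ⟨x, rfl⟩, (compOf_eq hu hv huv p x).symm⟩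

lemma compQ_inj {X : Type} {u v : X → ℤ} (hu : Function.Injective u)
    (huv : ∀ x y, u x ≠ v y) (p : Equiv.Perm X) : Function.Injective (compQ u v p) := by
  intro Q Q' h
  have h2 := (pair_inj hu huv).image_injective h
  induction Q using Quotient.inductionOn with
  | h x =>
  have : x ∈ {y | (Quotient.mk _ y : Orb p) = Q'} := by rw [← h2]; rfl
  exact this

lemma CompsOf_ncard {X : Type} [Fintype X] {u v : X → ℤ} (hu : Function.Injective u)
    (hv : Function.Injective v) (huv : ∀ x y, u x ≠ v y) (p : Equiv.Perm X) :
    (CompsOf (PP u v) (PP v (fun z => u (p z)))).ncard = Fintype.card (Orb p) := by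
  rw [CompsOf_eq hu hv huv, ← Set.image_univ, Set.ncard_image_of_injective _ (compQ_inj hu huv p),
    Set.ncard_univ, Nat.card_eq_fintype_card]

lemma CompsOf_sep_ncard {X : Type} [Fintype X] {u v : X → ℤ} (hu : Function.Injective u)
    (hv : Function.Injective v) (huv : ∀ x y, u x ≠ v y) (p : Equiv.Perm X)
    (Pr : Set (Set ℤ) → Prop) :
    {K ∈ CompsOf (PP u v) (PP v (fun z => u (p z))) | Pr K}.ncard
      = {Q : Orb p | Pr (compQ u v p Q)}.ncard := by
  rw [← Set.ncard_image_of_injective _ (compQ_inj hu huv p), CompsOf_eq hu hv huv]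
  congr 1
  ext K
  constructor
  · rintro ⟨⟨Q, rfl⟩, h⟩
    exact ⟨Q, h, rfl⟩
  · rintro ⟨Q, h, rfl⟩
    exact ⟨⟨Q, rfl⟩, h⟩

lemma negSet_pair (a b : ℤ) : negSet {a, b} = {-a, -b} := by
  simp [negSet, Set.image_pair]

lemma mem_negSet {B : Set ℤ} {x : ℤ} : x ∈ negSet B ↔ -x ∈ B := by
  constructor
  · rintro ⟨y, hy, rfl⟩; simpa using hy
  · intro h; exact ⟨-x, h, by simp⟩

lemma lp_neg {X : Type} [Finite X] (p : Equiv.Perm X) (ε : X → ℤˣ) {x y : X × ℤˣ}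
    (h : SameCycle (lp p ε) x y) : SameCycle (lp p ε) (x.1, -x.2) (y.1, -y.2) := by
  have := Fintype.ofFinite X
  obtain ⟨k, rfl⟩ := h.exists_nat_pow_eq
  obtain ⟨l, s⟩ := x
  refine ⟨k, ?_⟩
  rw [zpow_natCast, lp_pow, lp_pow]
  simp

lemma negComp_iff {X : Type} [Fintype X] (p : Equiv.Perm X) (ε : X → ℤˣ) {u v : X × ℤˣ → ℤ}
    (hu : Function.Injective u) (huv : ∀ x y, u x ≠ v y)
    (hun : ∀ l s, u (l, -s) = - u (l, s)) (hvn : ∀ l s, v (l, -s) = - v (l, s))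
    (Q : Orb (lp p ε)) :
    NegComp (compQ u v (lp p ε) Q) ↔ sgnQ p ε (orbProj p ε Q) = -1 := by
  induction Q using Quotient.inductionOn with
  | h x =>
  obtain ⟨l, s⟩ := x
  have e : sgnQ p ε (orbProj p ε (Quotient.mk _ (l, s))) = sgn p ε l := rfl
  rw [e, ← neg_iff p ε l s]
  have hmem : ∀ z, z ∈ ⋃₀ (compQ u v (lp p ε) (Quotient.mk _ (l, s))) ↔
      ∃ y, SameCycle (lp p ε) y (l, s) ∧ (z = u y ∨ z = v y) := by
    intro z
    constructor
    · rintro ⟨B, ⟨y, hy, rfl⟩, hz⟩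
      exact ⟨y, orb_eq.1 hy, hz⟩
    · rintro ⟨y, hy, hz⟩
      exact ⟨_, ⟨y, orb_eq.2 hy, rfl⟩, hz⟩
  unfold NegComp
  constructor
  · intro h
    have h1 : u (l, -s) ∈ negSet (⋃₀ (compQ u v (lp p ε) (Quotient.mk _ (l, s)))) := by
      rw [mem_negSet, hun, neg_neg, hmem]
      exact ⟨_, SameCycle.refl _ _, Or.inl rfl⟩
    rw [h, hmem] at h1
    obtain ⟨y, hy, h1 | h1⟩ := h1
    · rw [hu h1]; exact hy.symm
    · exact absurd h1 (huv _ _)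
  · intro h
    have hinv : ∀ z, z ∈ ⋃₀ (compQ u v (lp p ε) (Quotient.mk _ (l, s))) →
        -z ∈ ⋃₀ (compQ u v (lp p ε) (Quotient.mk _ (l, s))) := by
      intro z hz
      rw [hmem] at hz ⊢
      obtain ⟨y, hy, hz⟩ := hz
      refine ⟨(y.1, -y.2), (lp_neg p ε hy).trans h.symm, ?_⟩
      rw [hun, hvn]
      rcases hz with rfl | rfl
      · exact Or.inl rfl
      · exact Or.inr rfl
    ext z
    rw [mem_negSet]
    exact ⟨fun hz => by simpa using hinv _ hz, hinv z⟩

lemma partition_eq_of_subset {S : Set ℤ} {π ρ : Set (Set ℤ)} (h1 : IsPartitionOn S π)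
    (h2 : IsPartitionOn S ρ) (h : π ⊆ ρ) : π = ρ := by
  refine Set.Subset.antisymm h fun B hB => ?_
  obtain ⟨x, hx⟩ := (h2.1 B hB).2
  have hxS := (h2.1 B hB).1 hx
  obtain ⟨C, ⟨hC, hxC⟩, _⟩ := h1.2 x hxS
  obtain ⟨D, _, hD⟩ := h2.2 x hxS
  rw [hD B ⟨hB, hx⟩, ← hD C ⟨h hC, hxC⟩]
  exact hC

lemma block_unique {S : Set ℤ} {π : Set (Set ℤ)} (h1 : IsPartitionOn S π) {B C : Set ℤ}
    (hB : B ∈ π) (hC : C ∈ π) {x : ℤ} (hxB : x ∈ B) (hxC : x ∈ C) : B = C :=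
  (h1.2 x ((h1.1 B hB).1 hxB)).unique ⟨hB, hxB⟩ ⟨hC, hxC⟩


/-- A matching of `S` encoded by its left legs and a mate function. -/
structure Good (S L : Set ℤ) (f : L → ℤ) : Prop where
  inj : Function.Injective f
  lt : ∀ l : L, (l : ℤ) < f l
  nmem : ∀ l, f l ∉ L
  cover : ∀ x, x ∈ S ↔ x ∈ L ∨ ∃ l, f l = x

def NCf {L : Set ℤ} (f : L → ℤ) : Prop :=
  ∀ a b : L, (a : ℤ) < b → (b : ℤ) < f a → f a < f b → False

lemma Good.ne {S L : Set ℤ} {f : L → ℤ} (h : Good S L f) (x y : L) : (x : ℤ) ≠ f y := by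
  intro e; exact h.nmem y (e ▸ x.2)

lemma Good.part {S L : Set ℤ} {f : L → ℤ} (h : Good S L f) :
    IsPartitionOn S (PP (fun l : L => (l : ℤ)) f) ∧
      ∀ B ∈ PP (fun l : L => (l : ℤ)) f, IsPairB B := by
  refine partition_PP Subtype.val_injective h.inj h.ne S ?_
  intro x
  rw [h.cover]
  constructor
  · rintro (hx | ⟨l, hl⟩)
    · exact ⟨⟨x, hx⟩, Or.inl rfl⟩
    · exact ⟨l, Or.inr hl⟩
  · rintro ⟨y, rfl | hy⟩
    · exact Or.inl y.2
    · exact Or.inr ⟨y, hy⟩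

lemma pair_eq {a b c d : ℤ} (hab : a < b) (hcd : c < d) (h : ({a, b} : Set ℤ) = {c, d}) :
    a = c ∧ b = d := by
  have h1 : a ∈ ({c, d} : Set ℤ) := by rw [← h]; simp
  have h2 : b ∈ ({c, d} : Set ℤ) := by rw [← h]; simp
  have h3 : c ∈ ({a, b} : Set ℤ) := by rw [h]; simp
  simp only [Set.mem_insert_iff, Set.mem_singleton_iff] at h1 h2 h3
  omega

lemma Good.leftLegs {S L : Set ℤ} {f : L → ℤ} (h : Good S L f) :
    leftLegs (PP (fun l : L => (l : ℤ)) f) = L := by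
  ext a
  constructor
  · rintro ⟨b, hab, ⟨l, hl⟩⟩
    have := pair_eq (h.lt l) hab hl
    rw [← this.1]; exact l.2
  · intro ha
    exact ⟨f ⟨a, ha⟩, h.lt ⟨a, ha⟩, ⟨⟨a, ha⟩, rfl⟩⟩

lemma P2on_data {m : ℕ} {σ : Set (Set ℤ)} (h : P2on m σ) (L : Set ℤ) (hL : leftLegs σ = L) :
    ∃ f : L → ℤ, Good (posInterval m) L f ∧ σ = PP (fun l : L => (l : ℤ)) f := by
  subst hL
  have hex : ∀ l : leftLegs σ, ∃ b : ℤ, (l : ℤ) < b ∧ ({(l : ℤ), b} : Set ℤ) ∈ σ := fun l => l.2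
  choose f hlt hmem using hex
  have hG : Good (posInterval m) (leftLegs σ) f := by
    refine ⟨?_, hlt, ?_, ?_⟩
    · intro l l' e
      have := block_unique h.1 (hmem l) (hmem l') (x := f l) (by simp) (by simp [e])
      exact Subtype.ext (pair_eq (hlt l) (hlt l') this).1
    · intro l hl
      have := block_unique h.1 (hmem l) (hmem ⟨f l, hl⟩) (x := f l) (by simp) (by simp)
      have := (pair_eq (hlt l) (hlt ⟨f l, hl⟩) this).1
      have h2 := hlt l
      simp only at this
      omega
    · intro x
      constructor
      · intro hx
        obtain ⟨B, ⟨hB, hxB⟩, _⟩ := h.1.2 x hx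
        have hB2 : ∃ a b, a < b ∧ B = {a, b} := by
          obtain ⟨a, b, hab, rfl⟩ := h.2 B hB
          rcases lt_or_gt_of_ne hab with h' | h'
          · exact ⟨a, b, h', rfl⟩
          · exact ⟨b, a, h', Set.pair_comm _ _⟩
        obtain ⟨a, b, hab, rfl⟩ := hB2
        have ha : a ∈ leftLegs σ := ⟨b, hab, hB⟩
        rcases hxB with rfl | hxB
        · exact Or.inl ha
        · have hxB : x = b := hxB
          have := block_unique h.1 hB (hmem ⟨a, ha⟩) (x := a) (by simp) (by simp)
          have := pair_eq hab (hlt ⟨a, ha⟩) this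
          exact Or.inr ⟨⟨a, ha⟩, by rw [hxB, this.2]⟩
      · rintro (hx | ⟨l, rfl⟩)
        · exact (h.1.1 _ (hmem ⟨x, hx⟩)).1 (by simp)
        · exact (h.1.1 _ (hmem l)).1 (by simp)
  refine ⟨f, hG, ?_⟩
  symm
  refine partition_eq_of_subset hG.part.1 h.1 ?_
  rintro B ⟨l, rfl⟩
  exact hmem l

lemma Good.exists_mate {S L : Set ℤ} {f g : L → ℤ} (hf : Good S L f) (hg : Good S L g) (a : L) :
    ∃ c, g a = f c := by
  have : g a ∈ S := (hg.cover _).2 (Or.inr ⟨a, rfl⟩)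
  rcases (hf.cover _).1 this with h | ⟨c, hc⟩
  · exact absurd h (hg.nmem a)
  · exact ⟨c, hc.symm⟩

lemma Good.unique {S L : Set ℤ} {f h : L → ℤ} (hf : Good S L f) (hh : Good S L h)
    (nf : NCf f) (nh : NCf h) : f = h := by
  have key : ∀ k : ℕ, ∀ a : L, f a - a ≤ k → h a = f a := by
    intro k
    induction k with
    | zero => intro a ha; have := hf.lt a; simp at ha; omega
    | succ k ih =>
      intro a ha
      push_cast at ha
      have hge : ¬ h a < f a := by
        intro hlt
        obtain ⟨c, hc⟩ := hf.exists_mate hh a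
        have h1 := hh.lt a
        rcases lt_trichotomy (c : ℤ) a with h' | h' | h'
        · exact nf c a h' (by omega) (by omega)
        · have : c = a := Subtype.ext h'
          rw [this] at hc; omega
        · have := ih c (by omega)
          rw [← hc] at this
          have := hh.inj this
          rw [this] at h'; omega
      by_contra hne
      have hgt : f a < h a := by omega
      obtain ⟨d, hd⟩ := hh.exists_mate hf a
      have h1 := hf.lt a
      have h2 := hh.lt d
      rcases lt_trichotomy (d : ℤ) a with h' | h' | h'
      · exact nh d a h' (by omega) (by omega)
      · have : d = a := Subtype.ext h'
        rw [this] at hd; omega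
      · rcases lt_trichotomy (f d) (f a) with h3 | h3 | h3
        · have := ih d (by omega)
          omega
        · have := hf.inj h3
          rw [this] at h'; omega
        · exact nf a d h' (by omega) h3
  funext a
  have := hf.lt a
  exact (key (f a - a).toNat a (by omega)).symm

lemma Good.exists_nc {S L : Set ℤ} [Finite L] {f : L → ℤ} (hf : Good S L f) :
    ∃ h : L → ℤ, Good S L h ∧ NCf h := by
  classical
  have := Fintype.ofFinite L
  obtain ⟨τ, hτ, hmin⟩ := Finset.exists_min_image
    (Finset.univ.filter (fun τ : Equiv.Perm L => ∀ l : L, (l : ℤ) < f (τ l)))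
    (fun τ => ∑ l : L, (l : ℤ) * f (τ l)) ⟨1, by simpa using fun a ha => hf.lt ⟨a, ha⟩⟩
  simp only [Finset.mem_filter, Finset.mem_univ, true_and] at hτ hmin
  refine ⟨fun l => f (τ l), ⟨hf.inj.comp τ.injective, hτ, fun l => hf.nmem _, ?_⟩, ?_⟩
  · intro x
    rw [hf.cover]
    constructor
    · rintro (h | ⟨l, rfl⟩)
      · exact Or.inl h
      · exact Or.inr ⟨τ.symm l, by simp⟩
    · rintro (h | ⟨l, rfl⟩)
      · exact Or.inl h
      · exact Or.inr ⟨_, rfl⟩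
  · intro a b hab hba hfab
    have hne : a ≠ b := by rintro rfl; omega
    simp only at hba hfab
    have h1 : ∀ l : L, (l : ℤ) < f ((τ * Equiv.swap a b) l) := by
      intro l
      rw [Equiv.Perm.mul_apply]
      by_cases ha : l = a
      · subst ha; rw [Equiv.swap_apply_left]; omega
      by_cases hb : l = b
      · subst hb; rw [Equiv.swap_apply_right]; omega
      rw [Equiv.swap_apply_of_ne_of_ne ha hb]
      exact hτ l
    have h2 := hmin _ h1
    have h3 : ∑ l : L, ((l : ℤ) * f ((τ * Equiv.swap a b) l) - (l : ℤ) * f (τ l))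
        = ((a : ℤ) * f (τ b) - a * f (τ a)) + ((b : ℤ) * f (τ a) - b * f (τ b)) := by
      rw [Fintype.sum_eq_add a b hne]
      · simp
      · rintro x ⟨ha, hb⟩
        rw [Equiv.Perm.mul_apply, Equiv.swap_apply_of_ne_of_ne ha hb]; ring
    rw [Finset.sum_sub_distrib] at h3
    nlinarith

lemma nc_of_NCf {S L : Set ℤ} {f : L → ℤ} (hf : Good S L f)
    (h : NonCrossing (PP (fun l : L => (l : ℤ)) f)) : NCf f := by
  intro a b hab hba hfab
  apply h
  refine ⟨a, b, f a, f b, {(a : ℤ), f a}, {(b : ℤ), f b}, ⟨a, rfl⟩, ⟨b, rfl⟩, ?_, hab, hba, hfab,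
    by simp, by simp, by simp, by simp⟩
  intro e
  have := (pair_eq (hf.lt a) (hf.lt b) e).1
  omega

lemma NonCrossing_of_NCf {S L : Set ℤ} {f : L → ℤ} (hf : Good S L f) (h : NCf f) :
    NonCrossing (PP (fun l : L => (l : ℤ)) f) := by
  rintro ⟨i, j, k, l, B, C, ⟨a, rfl⟩, ⟨b, rfl⟩, -, hij, hjk, hkl, hi, hk, hj, hl⟩
  have := hf.lt a
  have := hf.lt b
  have hn := h a b
  simp only [Set.mem_insert_iff, Set.mem_singleton_iff] at hi hj hk hl
  exact hn (by omega) (by omega) (by omega)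

lemma hat2_eq {m : ℕ} {L : Set ℤ} {f h : L → ℤ} (hf : Good (posInterval m) L f)
    (hh : Good (posInterval m) L h) (nh : NCf h) :
    hat2Of m (PP (fun l : L => (l : ℤ)) f) = PP (fun l : L => (l : ℤ)) h := by
  have hex : ∃ ρ, Hat2Props m (PP (fun l : L => (l : ℤ)) f) ρ :=
    ⟨PP (fun l : L => (l : ℤ)) h, hh.part, NonCrossing_of_NCf hh nh,
      by rw [hf.leftLegs, hh.leftLegs]⟩
  unfold hat2Of
  rw [dif_pos hex]
  obtain ⟨h1, h2, h3⟩ := hex.choose_spec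
  rw [hf.leftLegs] at h3
  obtain ⟨g, hg, e⟩ := P2on_data h1 L h3
  rw [e] at h2 ⊢
  rw [hg.unique hh (nc_of_NCf hg h2) nh]


def uu (L : Set ℤ) (x : L × ℤˣ) : ℤ := (x.2 : ℤ) * (x.1 : ℤ)
def vv {L : Set ℤ} (f : L → ℤ) (ε : L → ℤˣ) (x : L × ℤˣ) : ℤ :=
  ((x.2 * ε x.1 : ℤˣ) : ℤ) * f x.1

/-- lift of a matching to a symmetric matching -/
def lift {L : Set ℤ} (f : L → ℤ) (ε : L → ℤˣ) : Set (Set ℤ) := PP (uu L) (vv f ε)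

lemma unit_cases (s : ℤˣ) : (s : ℤ) = 1 ∨ (s : ℤ) = -1 := by
  rcases Int.units_eq_one_or s with rfl | rfl <;> simp

lemma unit_mul_inj {s t : ℤˣ} {a b : ℤ} (ha : 0 < a) (hb : 0 < b) (h : (s : ℤ) * a = t * b) :
    s = t ∧ a = b := by
  rcases Int.units_eq_one_or s with rfl | rfl <;> rcases Int.units_eq_one_or t with rfl | rfl <;>
    simp at h ⊢ <;> omega

lemma pm_iff {m : ℕ} (x : ℤ) : x ∈ pmSet m ↔ |x| ∈ posInterval m := by
  show (x ≠ 0 ∧ |x| ≤ (m : ℤ)) ↔ (1 ≤ |x| ∧ |x| ≤ (m : ℤ))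
  rw [← abs_pos]
  omega

lemma exists_sign (x : ℤ) (hx : x ≠ 0) : ∃ s : ℤˣ, x = (s : ℤ) * |x| := by
  rcases lt_or_gt_of_ne hx with h | h
  · exact ⟨-1, by rw [abs_of_neg h]; simp⟩
  · exact ⟨1, by rw [abs_of_pos h]; simp⟩


lemma Good.posL {m : ℕ} {L : Set ℤ} {f : L → ℤ} (hf : Good (posInterval m) L f) (l : L) : 0 < (l : ℤ) := by
  have : (l : ℤ) ∈ posInterval m := (hf.cover _).2 (Or.inl l.2)
  exact this.1

lemma Good.posf {m : ℕ} {L : Set ℤ} {f : L → ℤ} (hf : Good (posInterval m) L f) (l : L) : 0 < f l := (hf.posL l).trans (hf.lt l)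

lemma uu_inj {m : ℕ} {L : Set ℤ} {f : L → ℤ} (hf : Good (posInterval m) L f) : Function.Injective (uu L) := by
  rintro ⟨l, s⟩ ⟨l', s'⟩ h
  have := unit_mul_inj (hf.posL l) (hf.posL l') h
  exact Prod.ext (Subtype.ext this.2) this.1

lemma vv_inj {m : ℕ} {L : Set ℤ} {f : L → ℤ} (hf : Good (posInterval m) L f) (ε : L → ℤˣ) : Function.Injective (vv f ε) := by
  rintro ⟨l, s⟩ ⟨l', s'⟩ h
  have := unit_mul_inj (hf.posf l) (hf.posf l') h
  have h2 := hf.inj this.2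
  subst h2
  exact Prod.ext rfl (mul_right_cancel this.1)

lemma uv_ne {m : ℕ} {L : Set ℤ} {f : L → ℤ} (hf : Good (posInterval m) L f) (ε : L → ℤˣ) (x y : L × ℤˣ) : uu L x ≠ vv f ε y := by
  intro h
  have := unit_mul_inj (hf.posL x.1) (hf.posf y.1) h
  exact hf.ne _ _ this.2

lemma lift_part {m : ℕ} {L : Set ℤ} {f : L → ℤ} (hf : Good (posInterval m) L f) (ε : L → ℤˣ) : IsPartitionOn (pmSet m) (lift f ε) ∧ ∀ B ∈ lift f ε, IsPairB B := by
  refine partition_PP (uu_inj hf) (vv_inj hf ε) (uv_ne hf ε) _ ?_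
  intro x
  constructor
  · intro hx
    have hx0 : x ≠ 0 := hx.1
    obtain ⟨s, hs⟩ := exists_sign x hx0
    rw [pm_iff, hf.cover] at hx
    rcases hx with h | ⟨l, hl⟩
    · exact ⟨(⟨|x|, h⟩, s), Or.inl hs.symm⟩
    · refine ⟨(l, s * ε l), Or.inr ?_⟩
      simp only [vv]
      rw [mul_assoc, Int.units_mul_self, mul_one, hl]
      exact hs.symm
  · rintro ⟨⟨l, s⟩, h⟩
    rw [pm_iff, hf.cover]
    rcases h with rfl | rfl
    · left
      have : |uu L (l, s)| = l := by
        simp only [uu]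
        rw [abs_mul, abs_of_pos (hf.posL l)]
        rcases unit_cases s with h | h <;> simp [h]
      rw [this]; exact l.2
    · right
      refine ⟨l, ?_⟩
      simp only [vv]
      rw [abs_mul, abs_of_pos (hf.posf l)]
      rcases unit_cases (s * ε l) with h | h <;> rw [h] <;> simp

lemma uu_neg {L : Set ℤ} (l : L) (s : ℤˣ) : uu L (l, -s) = - uu L (l, s) := by simp [uu]
lemma vv_neg {L : Set ℤ} {f : L → ℤ} (ε : L → ℤˣ) (l : L) (s : ℤˣ) : vv f ε (l, -s) = - vv f ε (l, s) := by simp [vv]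

lemma lift_neg {L : Set ℤ} {f : L → ℤ} (ε : L → ℤˣ) : ∀ B ∈ lift f ε, negSet B ∈ lift f ε := by
  rintro B ⟨⟨l, s⟩, rfl⟩
  refine ⟨(l, -s), ?_⟩
  simp only [uu_neg, vv_neg, negSet_pair]

lemma lift_ne {m : ℕ} {L : Set ℤ} {f : L → ℤ} (hf : Good (posInterval m) L f) (ε : L → ℤˣ) : ∀ B ∈ lift f ε, negSet B ≠ B := by
  rintro B ⟨⟨l, s⟩, rfl⟩ h
  simp only [negSet_pair, ← uu_neg, ← vv_neg] at h
  have : uu L (l, -s) ∈ ({uu L (l, s), vv f ε (l, s)} : Set ℤ) := by rw [← h]; simp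
  rcases this with h | h
  · have := congrArg Prod.snd (uu_inj hf h)
    simp at this
  · exact uv_ne hf ε _ _ h

lemma lift_legs {m : ℕ} {L : Set ℤ} {f : L → ℤ} (hf : Good (posInterval m) L f) (ε : L → ℤˣ) (a b : ℤ) (h : ({a, b} : Set ℤ) ∈ lift f ε) (hab : a < b) :
    (-a < b ∧ ∃ l, b = f l) ∨ (b < -a ∧ ∃ l, a = - f l) := by
  obtain ⟨⟨l, s⟩, h⟩ := h
  have h1 : a ∈ ({uu L (l, s), vv f ε (l, s)} : Set ℤ) := by
    have h' : ({uu L (l, s), vv f ε (l, s)} : Set ℤ) = {a, b} := h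
    rw [h']; simp
  have h2 : b ∈ ({uu L (l, s), vv f ε (l, s)} : Set ℤ) := by
    have h' : ({uu L (l, s), vv f ε (l, s)} : Set ℤ) = {a, b} := h
    rw [h']; simp
  have e1 := hf.posL l
  have e2 := hf.lt l
  simp only [Set.mem_insert_iff, Set.mem_singleton_iff, uu, vv] at h1 h2
  rcases unit_cases s with hs | hs <;> rcases unit_cases (s * ε l) with ht | ht <;>
    rw [hs, ht] at h1 h2 <;> 
    first
    | exact Or.inl ⟨by omega, l, by omega⟩
    | exact Or.inr ⟨by omega, l, by omega⟩

lemma lift_mem {m : ℕ} {L : Set ℤ} {f : L → ℤ} (hf : Good (posInterval m) L f) (ε : L → ℤˣ) (l : L) : ∃ a, |a| = (l : ℤ) ∧ ({a, f l} : Set ℤ) ∈ lift f ε := by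
  refine ⟨uu L (l, ε l), ?_, (l, ε l), ?_⟩
  · simp only [uu]
    rw [abs_mul, abs_of_pos (hf.posL l)]
    rcases unit_cases (ε l) with h | h <;> simp [h]
  · simp [vv, Int.units_mul_self]

lemma lift_posRight {m : ℕ} {L : Set ℤ} {f : L → ℤ} (hf : Good (posInterval m) L f) (ε : L → ℤˣ) : posRightLegs (lift f ε) = Set.range f := by
  ext b
  constructor
  · rintro ⟨a, hab, h, hp⟩
    rcases lift_legs hf ε a b h hab with ⟨_, l, hl⟩ | ⟨h, _⟩
    · exact ⟨l, hl.symm⟩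
    · omega
  · rintro ⟨l, rfl⟩
    obtain ⟨a, ha, h⟩ := lift_mem hf ε l
    have := hf.lt l
    have := le_abs_self a
    have := neg_le_abs a
    exact ⟨a, by omega, h, by omega⟩

lemma lift_negLeft {m : ℕ} {L : Set ℤ} {f : L → ℤ} (hf : Good (posInterval m) L f) (ε : L → ℤˣ) : negLeftLegs (lift f ε) = {x | -x ∈ Set.range f} := by
  ext a
  constructor
  · rintro ⟨b, hab, h, hp⟩
    rcases lift_legs hf ε a b h hab with ⟨_, l, hl⟩ | ⟨h, l, hl⟩
    · omega
    · exact ⟨l, by omega⟩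
  · rintro ⟨l, hl⟩
    obtain ⟨b, ha, h⟩ := lift_mem hf ε l
    have h3 := lift_neg ε _ h
    rw [negSet_pair, hl, neg_neg, Set.pair_comm] at h3
    have := hf.lt l
    have := le_abs_self b
    have := neg_le_abs b
    exact ⟨-b, by omega, h3, by omega⟩

lemma lift_hat {m : ℕ} {L : Set ℤ} {f : L → ℤ} (hf : Good (posInterval m) L f) {g : L → ℤ} (ε : L → ℤˣ) (hg : Good (posInterval m) L g)
    (hr : Set.range g = Set.range f) (ng : NCf g) : HatProps m (lift f ε) (lift g 1) := by
  refine ⟨(lift_part hg 1).1, fun B hB => Or.inl ((lift_part hg 1).2 B hB), ?_, lift_neg 1, ?_, ?_,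
    ?_, ?_⟩
  · rintro ⟨i, j, k, l, B, C, ⟨⟨a, s⟩, rfl⟩, ⟨⟨b, t⟩, rfl⟩, -, hij, hjk, hkl, hi, hk, hj, hl⟩
    have := hg.lt a
    have := hg.lt b
    have := hg.posL a
    have := hg.posL b
    have hn := ng a b
    have hn' := ng b a
    simp only [Set.mem_insert_iff, Set.mem_singleton_iff, uu, vv, Pi.one_apply, mul_one]
      at hi hj hk hl
    rcases unit_cases s with hs | hs <;> rcases unit_cases t with ht | ht <;>
      rw [hs] at hi hk <;> rw [ht] at hj hl
    · exact hn (by omega) (by omega) (by omega)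
    · omega
    · omega
    · exact hn' (by omega) (by omega) (by omega)
  · rintro B ⟨⟨a, s⟩, rfl⟩
    have h1 := hg.posL a
    have h2 := hg.posf a
    rcases unit_cases s with hs | hs
    · left
      rintro x (rfl | rfl) <;> simp [uu, vv, hs, h1, h2]
    · right
      rintro x (rfl | rfl) <;> simp [uu, vv, hs, h1, h2]
  · rw [lift_posRight hf, lift_posRight hg, hr]
  · rw [lift_negLeft hf, lift_negLeft hg, hr]
  · rintro ⟨a, b, c, -, -, -, h⟩
    obtain ⟨x, y, hxy, e⟩ := (lift_part hg 1).2 _ h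
    have h1 : x ∈ ({c} : Set ℤ) := by rw [e]; simp
    have h2 : y ∈ ({c} : Set ℤ) := by rw [e]; simp
    exact hxy (h1.trans h2.symm)

lemma hat_unique {m : ℕ} {L : Set ℤ} {f : L → ℤ} (hf : Good (posInterval m) L f) [Finite L] {g : L → ℤ} (ε : L → ℤˣ) (hg : Good (posInterval m) L g)
    (ng : NCf g) {ρ : Set (Set ℤ)} (hρ : HatProps m (lift f ε) ρ) : ρ = lift g 1 := by
  obtain ⟨hpart, -, hnc, hneg, hside, hpr, -, -⟩ := hρ
  rw [lift_posRight hf] at hpr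
  have hex : ∀ l : L, ∃ a : L, (a : ℤ) < f l ∧ ({(a : ℤ), f l} : Set ℤ) ∈ ρ := by
    intro l
    have : f l ∈ posRightLegs ρ := by rw [hpr]; exact ⟨l, rfl⟩
    obtain ⟨a, hab, h, hp⟩ := this
    have hpos : 0 < a := by
      rcases hside _ h with h' | h'
      · exact h' a (by simp)
      · have := h' (f l) (by simp)
        have := hf.posf l
        omega
    have haS : a ∈ posInterval m := by
      have := (hpart.1 _ h).1 (show a ∈ _ by simp)
      rw [pm_iff, abs_of_pos hpos] at this
      exact this
    rcases (hf.cover _).1 haS with haL | ⟨l', hl'⟩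
    · exact ⟨⟨a, haL⟩, hab, h⟩
    · exfalso
      have : a ∈ posRightLegs ρ := by rw [hpr]; exact ⟨l', hl'⟩
      obtain ⟨c, hca, h2, _⟩ := this
      have := block_unique hpart h h2 (x := a) (by simp) (by simp)
      have := pair_eq hab hca this
      omega
  choose k hk hkρ using hex
  have hkinj : Function.Injective k := by
    intro l l' e
    have h := hkρ l'
    rw [← e] at h
    have h3 := hk l'
    rw [← e] at h3
    have := block_unique hpart (hkρ l) h (x := k l) (by simp) (by simp)
    exact hf.inj (pair_eq (hk l) h3 this).2
  let e : L ≃ L := Equiv.ofBijective k (Finite.injective_iff_bijective.1 hkinj)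
  let g' : L → ℤ := fun a => f (e.symm a)
  have hke : ∀ a, k (e.symm a) = a := fun a => e.apply_symm_apply a
  have hg'ρ : ∀ a : L, ({(a : ℤ), g' a} : Set ℤ) ∈ ρ := by
    intro a
    have := hkρ (e.symm a)
    rw [hke] at this
    exact this
  have hg'lt : ∀ a : L, (a : ℤ) < g' a := by
    intro a
    have := hk (e.symm a)
    rw [hke] at this
    exact this
  have hg' : Good (posInterval m) L g' := by
    refine ⟨hf.inj.comp e.symm.injective, hg'lt, fun l => hf.nmem _, ?_⟩
    intro x
    rw [hf.cover]
    constructor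
    · rintro (h | ⟨l, rfl⟩)
      · exact Or.inl h
      · exact Or.inr ⟨e l, by simp [g']⟩
    · rintro (h | ⟨l, rfl⟩)
      · exact Or.inl h
      · exact Or.inr ⟨_, rfl⟩
  have hnc' : NCf g' := by
    apply nc_of_NCf hg'
    rintro ⟨i, j, k, l, B, C, ⟨a, rfl⟩, ⟨b, rfl⟩, h⟩
    exact hnc ⟨i, j, k, l, _, _, hg'ρ a, hg'ρ b, h⟩
  have hgg : g' = g := hg'.unique hg hnc' ng
  rw [hgg] at hg'ρ
  symm
  refine partition_eq_of_subset (lift_part hg 1).1 hpart ?_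
  rintro B ⟨⟨a, s⟩, rfl⟩
  rcases Int.units_eq_one_or s with rfl | rfl
  · simpa [uu, vv] using hg'ρ a
  · have := hneg _ (hg'ρ a)
    rw [negSet_pair] at this
    simpa [uu, vv] using this

lemma hat_eq {m : ℕ} {L : Set ℤ} {f : L → ℤ} (hf : Good (posInterval m) L f) [Finite L] {g : L → ℤ} (ε : L → ℤˣ) (hg : Good (posInterval m) L g)
    (hr : Set.range g = Set.range f) (ng : NCf g) : hatOf m (lift f ε) = lift g 1 := by
  have hex : ∃ ρ, HatProps m (lift f ε) ρ := ⟨_, lift_hat hf ε hg hr ng⟩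
  unfold hatOf
  rw [dif_pos hex]
  exact hat_unique hf ε hg ng hex.choose_spec



lemma lift_P2sym {n : ℕ} {L : Set ℤ} {f : L → ℤ} (hf : Good (posInterval (2 * n)) L f)
    (ε : L → ℤˣ) : P2sym n (lift f ε) :=
  ⟨(lift_part hf ε).1, (lift_part hf ε).2, lift_neg ε, lift_ne hf ε⟩

lemma lift_injective {m : ℕ} {L : Set ℤ} {f : L → ℤ} (hf : Good (posInterval m) L f) :
    Function.Injective (lift f) := by
  intro ε ε' h
  funext l
  have h1 : ({uu L (l, 1), vv f ε (l, 1)} : Set ℤ) ∈ lift f ε' := by rw [← h]; exact ⟨_, rfl⟩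
  have h2 : ({uu L (l, 1), vv f ε' (l, 1)} : Set ℤ) ∈ lift f ε' := ⟨_, rfl⟩
  have e := block_unique (lift_part hf ε').1 h1 h2 (x := uu L (l, 1)) (by simp) (by simp)
  have h3 : vv f ε (l, 1) ∈ ({uu L (l, 1), vv f ε' (l, 1)} : Set ℤ) := by rw [← e]; simp
  rcases h3 with h3 | h3
  · exact absurd h3.symm (uv_ne hf ε _ _)
  · have := (unit_mul_inj (hf.posf l) (hf.posf l) h3).1
    simpa using this

/-- forget the signs -/
def absP (π : Set (Set ℤ)) : Set (Set ℤ) := (fun B => (fun x : ℤ => |x|) '' B) '' π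

lemma absP_lift {m : ℕ} {L : Set ℤ} {f : L → ℤ} (hf : Good (posInterval m) L f) (ε : L → ℤˣ) :
    absP (lift f ε) = PP (fun l : L => (l : ℤ)) f := by
  have key : ∀ (x : L × ℤˣ), (fun x : ℤ => |x|) '' ({uu L x, vv f ε x} : Set ℤ)
      = {(x.1 : ℤ), f x.1} := by
    intro x
    have h1 : |uu L x| = x.1 := by
      simp only [uu]
      rw [abs_mul, abs_of_pos (hf.posL _)]
      rcases unit_cases x.2 with h | h <;> simp [h]
    have h2 : |vv f ε x| = f x.1 := by
      simp only [vv]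
      rw [abs_mul, abs_of_pos (hf.posf _)]
      rcases unit_cases (x.2 * ε x.1) with h | h <;> rw [h] <;> simp
    rw [Set.image_pair, h1, h2]
  ext B
  constructor
  · rintro ⟨_, ⟨x, rfl⟩, rfl⟩
    exact ⟨x.1, (key x).symm⟩
  · rintro ⟨l, rfl⟩
    exact ⟨_, ⟨(l, 1), rfl⟩, key (l, 1)⟩

lemma P2sym_mem {n : ℕ} {π : Set (Set ℤ)} (h : P2sym n π) {B : Set ℤ} (hB : B ∈ π) {a : ℤ}
    (ha : a ∈ B) : ∃ b, B = {a, b} ∧ |a| ≠ |b| := by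
  obtain ⟨x, y, hxy, rfl⟩ := h.2.1 B hB
  have hne : |x| ≠ |y| := by
    intro e
    rcases abs_eq_abs.1 e with e | e
    · exact hxy e
    · apply h.2.2.2 _ hB
      rw [negSet_pair, e, neg_neg, Set.pair_comm]
  rcases ha with rfl | ha
  · exact ⟨y, rfl, hne⟩
  · have ha : a = y := ha
    subst ha
    exact ⟨x, Set.pair_comm _ _, hne.symm⟩

lemma abs_negSet (B : Set ℤ) : (fun x : ℤ => |x|) '' negSet B = (fun x : ℤ => |x|) '' B := by
  unfold negSet
  rw [Set.image_image]
  simp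

lemma absP_P2on {n : ℕ} {π : Set (Set ℤ)} (h : P2sym n π) : P2on (2 * n) (absP π) := by
  refine ⟨⟨?_, ?_⟩, ?_⟩
  · rintro _ ⟨B, hB, rfl⟩
    obtain ⟨h1, h2⟩ := h.1.1 B hB
    refine ⟨?_, h2.image _⟩
    rintro _ ⟨x, hx, rfl⟩
    exact (pm_iff x).1 (h1 hx)
  · intro x hx
    have hx0 : 0 < x := hx.1
    have hxp : x ∈ pmSet (2 * n) := by rw [pm_iff, abs_of_pos hx0]; exact hx
    obtain ⟨B, ⟨hB, hxB⟩, _⟩ := h.1.2 x hxp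
    refine ⟨(fun x : ℤ => |x|) '' B, ⟨⟨B, hB, rfl⟩, x, hxB, abs_of_pos hx0⟩, ?_⟩
    rintro _ ⟨⟨C, hC, rfl⟩, y, hy, hyx⟩
    have hyx : |y| = x := hyx
    rcases (abs_eq hx0.le).1 hyx with rfl | rfl
    · rw [block_unique h.1 hB hC hxB hy]
    · have hnC := h.2.2.1 C hC
      have : x ∈ negSet C := mem_negSet.2 hy
      rw [block_unique h.1 hB hnC hxB this]
      exact (abs_negSet C).symm
  · rintro _ ⟨B, hB, rfl⟩
    obtain ⟨a, ha⟩ := (h.1.1 B hB).2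
    obtain ⟨b, rfl, hne⟩ := P2sym_mem h hB ha
    exact ⟨|a|, |b|, hne, by simp [Set.image_pair]⟩

lemma exists_lift {n : ℕ} {L : Set ℤ} {f : L → ℤ} (hf : Good (posInterval (2 * n)) L f)
    {π : Set (Set ℤ)} (h : P2sym n π) (e : absP π = PP (fun l : L => (l : ℤ)) f) :
    ∃ ε, lift f ε = π := by
  have hex : ∀ l : L, ∃ s : ℤˣ, ({(l : ℤ), (s : ℤ) * f l} : Set ℤ) ∈ π := by
    intro l
    have hl : (l : ℤ) ∈ pmSet (2 * n) := by
      rw [pm_iff, abs_of_pos (hf.posL l), hf.cover]; exact Or.inl l.2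
    obtain ⟨B, ⟨hB, hlB⟩, _⟩ := h.1.2 _ hl
    obtain ⟨b, rfl, hne⟩ := P2sym_mem h hB hlB
    have h1 : ({(l : ℤ), |b|} : Set ℤ) ∈ PP (fun l : L => (l : ℤ)) f := by
      rw [← e]
      refine ⟨_, hB, ?_⟩
      simp [Set.image_pair, abs_of_pos (hf.posL l)]
    have h2 : ({(l : ℤ), f l} : Set ℤ) ∈ PP (fun l : L => (l : ℤ)) f := ⟨l, rfl⟩
    have h3 := block_unique hf.part.1 h1 h2 (x := l) (by simp) (by simp)
    have h4 : |b| ∈ ({(l : ℤ), f l} : Set ℤ) := by rw [← h3]; simp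
    have h5 : |b| = f l := by
      rcases h4 with h4 | h4
      · rw [abs_of_pos (hf.posL l)] at hne
        exact absurd h4.symm hne
      · exact h4
    have hb0 : b ≠ 0 := by
      rintro rfl
      have := hf.posf l
      simp at h5; omega
    obtain ⟨s, hs⟩ := exists_sign b hb0
    refine ⟨s, ?_⟩
    rw [← h5, ← hs]; exact hB
  choose ε hε using hex
  refine ⟨ε, partition_eq_of_subset (lift_part hf ε).1 h.1 ?_⟩
  rintro B ⟨⟨l, s⟩, rfl⟩
  rcases Int.units_eq_one_or s with rfl | rfl
  · simpa [uu, vv] using hε l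
  · have := h.2.2.1 _ (hε l)
    rw [negSet_pair] at this
    simpa [uu, vv] using this

lemma Good.card {n : ℕ} {L : Set ℤ} [Fintype L] {f : L → ℤ}
    (hf : Good (posInterval (2 * n)) L f) : Fintype.card L = n := by
  have h1 : Fintype.card (L ⊕ L) = Fintype.card (Finset.Icc (1 : ℤ) (2 * n : ℕ)) := by
    have hS : ∀ x, x ∈ Finset.Icc (1 : ℤ) (2 * n : ℕ) ↔ x ∈ posInterval (2 * n) := by
      intro x; rw [Finset.mem_Icc]; rfl
    refine Fintype.card_of_bijective
      (f := Sum.elim (fun l : L => ⟨(l : ℤ), (hS _).2 ((hf.cover _).2 (Or.inl l.2))⟩)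
        (fun l : L => ⟨f l, (hS _).2 ((hf.cover _).2 (Or.inr ⟨l, rfl⟩))⟩)) ⟨?_, ?_⟩
    · rintro (a | a) (b | b) h <;> simp only [Sum.elim_inl, Sum.elim_inr, Subtype.mk.injEq] at h
      · rw [Subtype.ext h]
      · exact absurd h (hf.ne _ _)
      · exact absurd h.symm (hf.ne _ _)
      · rw [hf.inj h]
    · rintro ⟨x, hx⟩
      rcases (hf.cover x).1 ((hS x).1 hx) with h | ⟨l, hl⟩
      · exact ⟨Sum.inl ⟨x, h⟩, rfl⟩
      · exact ⟨Sum.inr l, Subtype.ext hl⟩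
  rw [Fintype.card_sum, Fintype.card_coe, Int.card_Icc] at h1
  omega

lemma Good.range_eq {S L : Set ℤ} {f g : L → ℤ} (hf : Good S L f) (hg : Good S L g) :
    Set.range f = Set.range g := by
  ext x
  constructor
  · rintro ⟨a, rfl⟩
    obtain ⟨c, hc⟩ := hg.exists_mate hf a
    exact ⟨c, hc.symm⟩
  · rintro ⟨a, rfl⟩
    obtain ⟨c, hc⟩ := hf.exists_mate hg a
    exact ⟨c, hc.symm⟩

lemma sum_lift {n : ℕ} {L : Set ℤ} [Fintype L] {f : L → ℤ}
    (hf : Good (posInterval (2 * n)) L f) (qp qm : ℂ) :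
    ∑ ε : L → ℤˣ, qm ^ cNeg n (lift f ε) * qp ^ (n - cCount n (lift f ε))
      = (1 + qm) ^ c2Count (2 * n) (PP (fun l : L => (l : ℤ)) f)
        * (2 * qp) ^ (n - c2Count (2 * n) (PP (fun l : L => (l : ℤ)) f)) := by
  classical
  obtain ⟨h, hh, nh⟩ := hf.exists_nc
  choose k hk using hh.exists_mate hf
  have hkinj : Function.Injective k := by
    intro a b e
    apply hf.inj
    rw [hk, hk, e]
  let p : Equiv.Perm L := Equiv.ofBijective k (Finite.injective_iff_bijective.1 hkinj)
  have hp : ∀ l, f l = h (p l) := hk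
  have hcard := hf.card
  have hc : c2Count (2 * n) (PP (fun l : L => (l : ℤ)) f) = Fintype.card (Orb p) := by
    unfold c2Count
    rw [hat2_eq hf hh nh]
    have e : PP (fun l : L => (l : ℤ)) h = PP f (fun z => ((p z : L) : ℤ)) := by
      ext B
      constructor
      · rintro ⟨l, rfl⟩
        refine ⟨p.symm l, ?_⟩
        simp only [hp, Equiv.apply_symm_apply, Set.pair_comm]
      · rintro ⟨l, rfl⟩
        refine ⟨p l, ?_⟩
        simp only [hp, Set.pair_comm]
    rw [e]
    exact CompsOf_ncard (u := fun l : L => (l : ℤ)) Subtype.val_injective hf.inj hf.ne p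
  have hhat : ∀ ε, hatOf (2 * n) (lift f ε)
      = PP (vv f ε) (fun z => uu L (lp p ε z)) := by
    intro ε
    rw [hat_eq hf ε hh (hh.range_eq hf) nh]
    have key : ∀ z : L × ℤˣ, ({uu L (lp p ε z), vv h 1 (lp p ε z)} : Set ℤ)
        = {vv f ε z, uu L (lp p ε z)} := by
      intro z
      rw [Set.pair_comm]
      simp [vv, lp, hp]
    ext B
    constructor
    · rintro ⟨z, rfl⟩
      refine ⟨(lp p ε).symm z, ?_⟩
      have := key ((lp p ε).symm z)
      rw [Equiv.apply_symm_apply] at this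
      simp only [Equiv.apply_symm_apply]
      exact this.symm
    · rintro ⟨z, rfl⟩
      exact ⟨lp p ε z, key z⟩
  have hneg : ∀ ε, cNeg n (lift f ε)
      = (Finset.univ.filter (fun K : Orb p => sgnQ p ε K = -1)).card := by
    intro ε
    unfold cNeg
    rw [hhat ε, ← card_neg_orb]
    unfold lift
    rw [CompsOf_sep_ncard (uu_inj hf) (vv_inj hf ε) (uv_ne hf ε) (lp p ε) NegComp]
    simp only [negComp_iff p ε (uu_inj hf) (uv_ne hf ε) uu_neg (vv_neg ε)]
  have hcnt : ∀ ε, cCount n (lift f ε) = Fintype.card (Orb p) := by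
    intro ε
    unfold cCount
    rw [hneg ε, hhat ε]
    unfold lift
    rw [CompsOf_sep_ncard (uu_inj hf) (vv_inj hf ε) (uv_ne hf ε) (lp p ε) (fun K => ¬ NegComp K)]
    simp only [negComp_iff p ε (uu_inj hf) (uv_ne hf ε) uu_neg (vv_neg ε)]
    rw [card_pos_orb, Nat.mul_div_cancel_left _ (by norm_num : 0 < 2),
      Finset.card_filter_add_card_filter_not, Finset.card_univ]
  simp only [hcnt, hneg]
  have hss : ∑ ε : L → ℤˣ, qm ^ (Finset.univ.filter (fun K : Orb p => sgnQ p ε K = -1)).card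
      = (1 + qm) ^ (Fintype.card (Orb p)) * 2 ^ (Fintype.card L - Fintype.card (Orb p)) := by
    convert sum_sign p qm
  rw [← Finset.sum_mul, hss, hc, hcard, mul_pow]
  ring

lemma posInterval_finite (m : ℕ) : (posInterval m).Finite :=
  (Set.finite_Icc (1 : ℤ) m).subset fun _ h => h

lemma pmSet_finite (m : ℕ) : (pmSet m).Finite :=
  (Set.finite_Icc (-m : ℤ) m).subset fun _ h => abs_le.1 h.2

lemma partitions_finite {S : Set ℤ} (hS : S.Finite) : {π | IsPartitionOn S π}.Finite := by
  refine (hS.finite_subsets.finite_subsets).subset ?_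
  intro π hπ B hB
  exact (hπ.1 B hB).1

end aux

/-- for every n and all q₊,q₋,
Σ_{π∈P₂^{sym}(2n)} q₋^{c₋(π)} q₊^{l_c(π)} = Σ_{π∈P₂(2n)} (1+q₋)^{c(π)} (2q₊)^{n−c(π)},
where l_c(π) = n − c(π) on the left-hand side. -/
theorem symmetric_vs_plain_pair_partitions (n : ℕ) (qp qm : ℂ) :
    (∑ᶠ π ∈ {π : Set (Set ℤ) | P2sym n π}, qm ^ cNeg n π * qp ^ (n - cCount n π))
      = ∑ᶠ π ∈ {π : Set (Set ℤ) | P2on (2 * n) π},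
          (1 + qm) ^ c2Count (2 * n) π * (2 * qp) ^ (n - c2Count (2 * n) π) := by
  classical
  have hA : {π : Set (Set ℤ) | P2sym n π}.Finite :=
    (partitions_finite (pmSet_finite (2 * n))).subset fun π h => h.1
  have hB : {π : Set (Set ℤ) | P2on (2 * n) π}.Finite :=
    (partitions_finite (posInterval_finite (2 * n))).subset fun π h => h.1
  rw [finsum_mem_eq_finite_toFinset_sum _ hA, finsum_mem_eq_finite_toFinset_sum _ hB]
  rw [← Finset.sum_fiberwise_of_maps_to (g := absP) (t := hB.toFinset)]
  · refine Finset.sum_congr rfl fun σ hσ => ?_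
    have hσ : P2on (2 * n) σ := by simpa using hσ
    obtain ⟨f, hf, e⟩ := P2on_data hσ _ rfl
    have hLfin : (leftLegs σ).Finite := (posInterval_finite (2 * n)).subset
      fun x hx => (hf.cover x).2 (Or.inl hx)
    have := hLfin.fintype
    have hs := sum_lift hf qp qm
    rw [← e] at hs
    rw [← hs]
    symm
    refine Finset.sum_bij (fun ε _ => lift f ε) ?_ ?_ ?_ ?_
    · intro ε _
      simp only [Finset.mem_filter, Set.Finite.mem_toFinset]
      refine ⟨lift_P2sym hf ε, ?_⟩
      rw [absP_lift hf, ← e]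
    · intro ε _ ε' _ h
      exact lift_injective hf h
    · intro π hπ
      simp only [Finset.mem_filter, Set.Finite.mem_toFinset] at hπ
      obtain ⟨ε, hε⟩ := exists_lift hf hπ.1 (hπ.2.trans e)
      exact ⟨ε, Finset.mem_univ _, hε⟩
    · intros; rfl
  · intro π hπ
    simp only [Set.Finite.mem_toFinset] at hπ ⊢
    exact absP_P2on hπ

end TypeB
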